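/- arXiv:2005.00383 — 2 statements merged into one kernel-verified Lean document; each statement's English description precedes it below -/
import Mathlib

section
/- Let n ≥ 1, d, m be natural numbers and τ > 0 a real number. Fix ψ : (Fin 3 → ℝ) → (Fin d → ℝ) and ρ : (Fin d → ℝ) → (Fin d → ℝ) → (Fin m → ℝ). For a point cloud P : Fin n → (Fin 3 → ℝ) define: the global feature (g P) k = max over i : Fin n of ψ (P i) k; the preliminary matrix (S̄ P) i j = ρ (ψ (P i)) (g P) j; and the sampling matrix (S P) i j = exp((S̄ P) i j / τ) / ∑_{k : Fin n} exp((S̄ P) k j / τ). Then for every permutation σ of Fin n, (S (P ∘ σ)) i j = (S P) (σ i) j for all i : Fin n and j : Fin m. -/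
/-!
The global feature is a maximum over all points, hence invariant under reordering them
(`globalFeature_perm`). Each row of the preliminary matrix depends only on its own point and on
the global feature, so reordering the points reorders the rows (`prelimMatrix_perm`). The softmax
denominators are sums over all rows, which reindexing by `σ` leaves unchanged.
-/

/-- The global feature: coordinate-wise max-pooling of the point-wise features
`ψ (P i)` over the (nonempty) index set `Fin n`. -/
noncomputable def globalFeature {n d : ℕ} (hn : 0 < n) (ψ : (Fin 3 → ℝ) → Fin d → ℝ)
    (P : Fin n → Fin 3 → ℝ) : Fin d → ℝ :=
  fun k => Finset.univ.sup' (Finset.univ_nonempty_iff.mpr (Fin.pos_iff_nonempty.mp hn))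
    (fun i => ψ (P i) k)

/-- The preliminary sampling matrix: row `i` is `ρ` applied to the local feature
of point `i` and the global feature. -/
noncomputable def prelimMatrix {n d m : ℕ} (hn : 0 < n) (ψ : (Fin 3 → ℝ) → Fin d → ℝ)
    (ρ : (Fin d → ℝ) → (Fin d → ℝ) → Fin m → ℝ) (P : Fin n → Fin 3 → ℝ) :
    Fin n → Fin m → ℝ :=
  fun i j => ρ (ψ (P i)) (globalFeature hn ψ P) j

/-- The sampling matrix: tempered column-wise softmax of the preliminary matrix. -/
noncomputable def samplingMatrix {n d m : ℕ} (hn : 0 < n) (τ : ℝ)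
    (ψ : (Fin 3 → ℝ) → Fin d → ℝ) (ρ : (Fin d → ℝ) → (Fin d → ℝ) → Fin m → ℝ)
    (P : Fin n → Fin 3 → ℝ) : Fin n → Fin m → ℝ :=
  fun i j => Real.exp (prelimMatrix hn ψ ρ P i j / τ) /
    ∑ k : Fin n, Real.exp (prelimMatrix hn ψ ρ P k j / τ)

theorem globalFeature_perm {n d : ℕ} (hn : 0 < n) (ψ : (Fin 3 → ℝ) → Fin d → ℝ)
    (P : Fin n → Fin 3 → ℝ) (σ : Equiv.Perm (Fin n)) :
    globalFeature hn ψ (P ∘ σ) = globalFeature hn ψ P := by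
  funext k
  apply le_antisymm
  · exact Finset.sup'_le _ _ fun i _ =>
      Finset.le_sup' (fun i => ψ (P i) k) (Finset.mem_univ (σ i))
  · refine Finset.sup'_le _ _ fun i _ => ?_
    simp only [globalFeature, Finset.le_sup'_iff]
    exact ⟨σ.symm i, Finset.mem_univ _, by simp⟩

theorem prelimMatrix_perm {n d m : ℕ} (hn : 0 < n) (ψ : (Fin 3 → ℝ) → Fin d → ℝ)
    (ρ : (Fin d → ℝ) → (Fin d → ℝ) → Fin m → ℝ) (P : Fin n → Fin 3 → ℝ)
    (σ : Equiv.Perm (Fin n)) (i : Fin n) (j : Fin m) :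
    prelimMatrix hn ψ ρ (P ∘ σ) i j = prelimMatrix hn ψ ρ P (σ i) j := by
  simp only [prelimMatrix, globalFeature_perm, Function.comp_apply]

/-- Permuting the input point cloud permutes the rows of the learned sampling
matrix by the same permutation: `S̃ = E·S`. -/
theorem samplingMatrix_perm (n d m : ℕ) (hn : 0 < n) (τ : ℝ) (hτ : 0 < τ)
    (ψ : (Fin 3 → ℝ) → Fin d → ℝ) (ρ : (Fin d → ℝ) → (Fin d → ℝ) → Fin m → ℝ)
    (P : Fin n → Fin 3 → ℝ) (σ : Equiv.Perm (Fin n)) :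
    ∀ (i : Fin n) (j : Fin m),
      samplingMatrix hn τ ψ ρ (P ∘ σ) i j = samplingMatrix hn τ ψ ρ P (σ i) j := by
  intro i j
  simp only [samplingMatrix, prelimMatrix_perm]
  rw [Equiv.sum_comp σ fun k => Real.exp (prelimMatrix hn ψ ρ P k j / τ)]
end

section
/- Let n ≥ 1 be a natural number, v : Fin n → ℝ, τ > 0 and δ > 0 real numbers, and i₀ : Fin n an index such that v i ≤ v i₀ − δ for every i ≠ i₀. Then the softmax weight at i₀ satisfies the quantitative lower bound exp(v i₀ / τ) / ∑_{i : Fin n} exp(v i / τ) ≥ 1 / (1 + (n − 1) * exp(−δ / τ)). In particular, the dominant entry of each softmax column approaches 1 exponentially fast as τ decreases. -/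
/-!
The gap hypothesis gives `exp (v i / τ) ≤ exp (v i₀ / τ) * exp (-δ / τ)` for each of the `n - 1`
indices `i ≠ i₀`, so the normalizing sum is at most
`exp (v i₀ / τ) * (1 + (n - 1) * exp (-δ / τ))`; dividing gives the bound.
-/

/-- Quantitative softmax concentration: if every other entry of `v` is at least
`δ` below `v i₀`, then the tempered softmax weight at `i₀` is at least
`1 / (1 + (n − 1) · exp (−δ/τ))`. -/
theorem softmax_dominant_lower_bound (n : ℕ) (hn : 0 < n) (v : Fin n → ℝ)
    (τ δ : ℝ) (hτ : 0 < τ) (hδ : 0 < δ) (i₀ : Fin n)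
    (hgap : ∀ i : Fin n, i ≠ i₀ → v i ≤ v i₀ - δ) :
    Real.exp (v i₀ / τ) / ∑ i : Fin n, Real.exp (v i / τ) ≥
      1 / (1 + ((n : ℝ) - 1) * Real.exp (-δ / τ)) := by
  have hS : 0 < ∑ i : Fin n, Real.exp (v i / τ) :=
    Finset.sum_pos (fun i _ => Real.exp_pos _) ⟨i₀, Finset.mem_univ _⟩
  have hn1 : (1 : ℝ) ≤ n := by exact_mod_cast hn
  have hD : 0 < 1 + ((n : ℝ) - 1) * Real.exp (-δ / τ) := by
    have := mul_nonneg (sub_nonneg.2 hn1) (Real.exp_pos (-δ / τ)).le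
    linarith
  -- Each of the `n - 1` entries other than `i₀` contributes at most
  -- `exp (v i₀ / τ) * exp (-δ / τ)` to the normalizing sum.
  have hrest : ∑ i ∈ Finset.univ.erase i₀, Real.exp (v i / τ) ≤
      ((n : ℝ) - 1) * (Real.exp (v i₀ / τ) * Real.exp (-δ / τ)) := by
    have h := Finset.sum_le_card_nsmul (Finset.univ.erase i₀)
      (fun i => Real.exp (v i / τ)) (Real.exp (v i₀ / τ) * Real.exp (-δ / τ)) (by
        intro i hi
        rw [← Real.exp_add, ← add_div, ← sub_eq_add_neg]
        have := hgap i (Finset.ne_of_mem_erase hi)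
        gcongr)
    rwa [nsmul_eq_mul, Finset.card_erase_of_mem (Finset.mem_univ _), Finset.card_univ,
      Fintype.card_fin, Nat.cast_pred hn] at h
  rw [ge_iff_le, div_le_div_iff₀ hD hS, one_mul,
    ← Finset.add_sum_erase _ _ (Finset.mem_univ i₀)]
  linarith
end
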